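/- Let G be a finite simple undirected graph, k ≥ 2 a natural number, and S a subset of its vertex set with |S| = k and cut size c = |E(S, V \ S)| > 0. Then φ_S(S) = c / (k(k−1) + c) if and only if the induced subgraph G[S] is a complete graph on k vertices; hence G contains a k-clique with positive cut size exactly when some k-element vertex set attains this conductance value. -/

import Mathlib

/-!
Splitting each neighbourhood along `S` and `Sᶜ` gives
`vol S = ∑_{u ∈ S} d_S(u) + c` (`vol_eq_sum_degIn_add_card_cutE`). Since `c > 0`, the two
fractions with numerator `c` agree exactly when their denominators do, that is, when
`∑_{u ∈ S} d_S(u) = k (k - 1)`. Every term of that sum is at most `k - 1`, with equality exactly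
when `u` is adjacent to all other vertices of `S` (`degIn_eq_iff`), so the sum attains the value
`k (k - 1)` exactly when `S` is a clique. The existence statement is this equivalence applied to
each `k`-element set.
-/

open Finset
open scoped Classical

variable {V : Type*} [Fintype V] [DecidableEq V]

/-- The set of edges of `G` with one endpoint in `S` and the other in `T`. -/
noncomputable def cutE (G : SimpleGraph V) (S T : Finset V) : Finset (Sym2 V) :=
  G.edgeFinset.filter fun ed => ∃ a ∈ S, ∃ b ∈ T, ed = s(a, b)

/-- The set of edges of `G` with both endpoints in `S`. -/
noncomputable def inE (G : SimpleGraph V) (S : Finset V) : Finset (Sym2 V) :=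
  G.edgeFinset.filter fun ed => ∀ v ∈ ed, v ∈ S

/-- vol(S): sum of the degrees of the vertices of `S`. -/
noncomputable def vol (G : SimpleGraph V) (S : Finset V) : ℕ :=
  ∑ u ∈ S, G.degree u

/-- d_S(u): number of neighbors of `u` inside `S`. -/
noncomputable def degIn (G : SimpleGraph V) (S : Finset V) (u : V) : ℕ :=
  (S.filter fun v => G.Adj u v).card

/-- Conductance φ(S). -/
noncomputable def phi (G : SimpleGraph V) (S : Finset V) : ℝ :=
  ((cutE G S Sᶜ).card : ℝ) /
    ((min (vol G S) (2 * G.edgeFinset.card - vol G S) : ℕ) : ℝ)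

/-- Subgraph conductance φ_S(S) = |E(S, V\S)| / vol(S). -/
noncomputable def phiS (G : SimpleGraph V) (S : Finset V) : ℝ :=
  ((cutE G S Sᶜ).card : ℝ) / (vol G S : ℝ)

/-- Quality score f(S). -/
noncomputable def qual (G : SimpleGraph V) (S : Finset V) : ℝ :=
  (2 * (inE G S).card : ℝ) / (2 * (inE G S).card + (cutE G S Sᶜ).card : ℝ)

/-- A cut edge has a unique orientation from `S` to its complement, so cut edges may be counted as
ordered pairs, grouped by their endpoint in `S`. -/
lemma card_cutE_eq_sum (G : SimpleGraph V) (S : Finset V) :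
    (cutE G S Sᶜ).card = ∑ u ∈ S, (Sᶜ.filter fun v => G.Adj u v).card := by
  rw [← Finset.card_sigma]
  symm
  refine Finset.card_bij (fun p _ => s(p.1, p.2)) ?_ ?_ ?_
  · rintro ⟨a, b⟩ h
    simp only [mem_sigma, mem_filter] at h
    simp only [cutE, mem_filter, SimpleGraph.mem_edgeFinset, SimpleGraph.mem_edgeSet]
    exact ⟨h.2.2, a, h.1, b, h.2.1, rfl⟩
  · rintro ⟨a, b⟩ h ⟨a', b'⟩ h' e
    simp only [mem_sigma, mem_filter, mem_compl] at h h'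
    rcases Sym2.eq_iff.1 e with ⟨h1, h2⟩ | ⟨h1, h2⟩
    · simp only at h1 h2
      subst h1 h2
      rfl
    · simp only at h1 h2
      subst h1
      exact absurd h.1 h'.2.1
  · intro e he
    simp only [cutE, mem_filter, SimpleGraph.mem_edgeFinset] at he
    obtain ⟨hadj, a, ha, b, hb, rfl⟩ := he
    exact ⟨⟨a, b⟩, by simpa [ha] using ⟨by simpa using hb, hadj⟩, rfl⟩

lemma degree_eq_degIn_add (G : SimpleGraph V) (S : Finset V) (u : V) :
    G.degree u = degIn G S u + (Sᶜ.filter fun v => G.Adj u v).card := by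
  rw [degIn, ← Finset.card_union_of_disjoint
    (Finset.disjoint_filter_filter disjoint_compl_right), ← Finset.filter_union,
    Finset.union_compl, ← SimpleGraph.card_neighborFinset_eq_degree]
  congr 1
  ext v
  simp

lemma vol_eq_sum_degIn_add_card_cutE (G : SimpleGraph V) (S : Finset V) :
    vol G S = ∑ u ∈ S, degIn G S u + (cutE G S Sᶜ).card := by
  rw [card_cutE_eq_sum, ← Finset.sum_add_distrib]
  exact Finset.sum_congr rfl fun u _ => degree_eq_degIn_add G S u

lemma filter_adj_subset_erase (G : SimpleGraph V) (S : Finset V) (u : V) :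
    (S.filter fun v => G.Adj u v) ⊆ S.erase u := fun v hv => by
  rw [mem_filter] at hv
  exact mem_erase.2 ⟨hv.2.ne', hv.1⟩

lemma degIn_le (G : SimpleGraph V) {S : Finset V} {u : V} (hu : u ∈ S) :
    degIn G S u ≤ S.card - 1 := by
  rw [← Finset.card_erase_of_mem hu]
  exact Finset.card_le_card (filter_adj_subset_erase G S u)

lemma degIn_eq_iff (G : SimpleGraph V) {S : Finset V} {u : V} (hu : u ∈ S) :
    degIn G S u = S.card - 1 ↔ ∀ v ∈ S, u ≠ v → G.Adj u v := by
  rw [← Finset.card_erase_of_mem hu]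
  constructor
  · intro h v hv huv
    have heq := Finset.eq_of_subset_of_card_le (filter_adj_subset_erase G S u) h.ge
    have hmem : v ∈ S.erase u := mem_erase.2 ⟨huv.symm, hv⟩
    rw [← heq] at hmem
    exact (mem_filter.1 hmem).2
  · intro h
    refine congrArg Finset.card (Finset.Subset.antisymm (filter_adj_subset_erase G S u) ?_)
    intro v hv
    rw [mem_erase] at hv
    exact mem_filter.2 ⟨hv.2, h v hv.2 hv.1.symm⟩

lemma sum_degIn_eq_iff (G : SimpleGraph V) (S : Finset V) :
    ∑ u ∈ S, degIn G S u = S.card * (S.card - 1) ↔ G.IsClique (S : Set V) := by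
  rw [← smul_eq_mul, ← Finset.sum_const,
    Finset.sum_eq_sum_iff_of_le fun u hu => degIn_le G hu]
  exact forall₂_congr fun u hu => degIn_eq_iff G hu

lemma phiS_eq_iff (G : SimpleGraph V) (k : ℕ) (S : Finset V)
    (hk : S.card = k) (hc : 0 < (cutE G S Sᶜ).card) :
    phiS G S = ((cutE G S Sᶜ).card : ℝ)
        / ((k * (k - 1) : ℕ) + (cutE G S Sᶜ).card : ℝ) ↔
      G.IsClique (S : Set V) := by
  rw [← sum_degIn_eq_iff, hk, phiS, vol_eq_sum_degIn_add_card_cutE]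
  have hc' : ((cutE G S Sᶜ).card : ℝ) ≠ 0 := by exact_mod_cast hc.ne'
  -- Cancel the nonzero numerator; `inv_inj` needs no condition on the denominators.
  rw [div_eq_mul_inv, div_eq_mul_inv, mul_right_inj' hc', inv_inj]
  norm_cast
  exact Nat.add_right_cancel_iff

/-- for k ≥ 2, |S| = k and c = |E(S,V\S)| > 0:
φ_S(S) = c/(k(k−1)+c) iff G[S] is a complete graph on the k vertices of S;
hence G contains a k-clique with positive cut size exactly when some k-element
vertex set attains this conductance value. -/
theorem stmt15 (G : SimpleGraph V) (k : ℕ) (hk2 : 2 ≤ k) (S : Finset V)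
    (hk : S.card = k) (hc : 0 < (cutE G S Sᶜ).card) :
    (phiS G S = ((cutE G S Sᶜ).card : ℝ)
        / ((k * (k - 1) : ℕ) + (cutE G S Sᶜ).card : ℝ) ↔
      G.IsClique (S : Set V)) ∧
    ((∃ T : Finset V, T.card = k ∧ 0 < (cutE G T Tᶜ).card ∧
        G.IsClique (T : Set V)) ↔
      (∃ T : Finset V, T.card = k ∧ 0 < (cutE G T Tᶜ).card ∧
        phiS G T = ((cutE G T Tᶜ).card : ℝ)
          / ((k * (k - 1) : ℕ) + (cutE G T Tᶜ).card : ℝ))) := by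
  refine ⟨phiS_eq_iff G k S hk hc, exists_congr fun T => and_congr_right fun hT =>
    and_congr_right fun hcT => (phiS_eq_iff G k T hT hcT).symm⟩
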